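/- Fix constants A ≥ 2 and Θ > 0, and let Z be a nonnegative random variable satisfying P(Z > ϑ) ≤ 2A · exp(−ϑ²/(2eΘ²)) for all ϑ > 0. Then for every real p ≥ 1 one has E[Z^{2p}] ≤ (p^p + (ln A)^p) · (8eΘ²)^p. -/

import Mathlib

open MeasureTheory Real

theorem gamma_aux (n : ℕ) : ∀ p : ℝ, 1 ≤ p → p ≤ n + 2 → Real.Gamma (p + 1) ≤ p ^ p := by
  induction n with
  | zero =>
    intro p h1 h2
    have h2' : p ≤ 2 := by simpa using h2
    rw [Real.Gamma_add_one (by linarith)]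
    have hc := Real.convexOn_Gamma.2 (show (1:ℝ) ∈ Set.Ioi 0 by simp)
      (show (2:ℝ) ∈ Set.Ioi 0 by simp) (show 0 ≤ 2 - p by linarith)
      (show 0 ≤ p - 1 by linarith) (by ring)
    simp only [smul_eq_mul, Real.Gamma_one, Real.Gamma_two] at hc
    have e : (2 - p) * 1 + (p - 1) * 2 = p := by ring
    rw [e] at hc
    have h3 : p ≤ p ^ p := by
      simpa using Real.rpow_le_rpow_of_exponent_le h1 h1
    nlinarith
  | succ n ih =>
    intro p h1 h2
    rcases le_total p (n + 2) with h | h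
    · exact ih p h1 h
    have hn : (0:ℝ) ≤ n := Nat.cast_nonneg n
    push_cast at h2
    have := ih (p - 1) (by linarith) (by linarith)
    rw [sub_add_cancel] at this
    rw [Real.Gamma_add_one (by linarith)]
    have h4 : (p - 1) ^ (p - 1) ≤ p ^ (p - 1) :=
      Real.rpow_le_rpow (by linarith) (by linarith) (by linarith)
    have h5 : p ^ p = p * p ^ (p - 1) := by
      rw [Real.rpow_sub_one (by linarith)]; field_simp
    rw [h5]
    exact mul_le_mul_of_nonneg_left (this.trans h4) (by linarith)

theorem gamma_le (p : ℝ) (h : 1 ≤ p) : Real.Gamma (p + 1) ≤ p ^ p := by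
  obtain ⟨n, hn⟩ := exists_nat_ge p
  exact gamma_aux n p h (by linarith)

theorem lint_gamma (p : ℝ) (hp : 1 ≤ p) :
    ∫⁻ t in Set.Ioi (0:ℝ), ENNReal.ofReal (t ^ (p - 1) * Real.exp (-((1/2) * t))) =
      ENNReal.ofReal (2 ^ p * Real.Gamma p) := by
  have h := Real.integral_rpow_mul_exp_neg_mul_Ioi (a := p) (r := 1/2) (by linarith) (by norm_num)
  have hpos : 0 < Real.Gamma p := Real.Gamma_pos_of_pos (by linarith)
  have h2 : (1 / (1/2:ℝ)) = 2 := by norm_num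
  rw [h2] at h
  have hi : IntegrableOn (fun t : ℝ => t ^ (p - 1) * Real.exp (-((1/2) * t))) (Set.Ioi 0) := by
    by_contra hc
    rw [integral_undef hc] at h
    have : 0 < (2:ℝ) ^ p * Real.Gamma p := by positivity
    linarith
  rw [← h, ofReal_integral_eq_lintegral_ofReal hi]
  filter_upwards [ae_restrict_mem measurableSet_Ioi] with t ht
  have : (0:ℝ) < t := ht
  simp only [Pi.zero_apply]
  positivity

theorem lint_pow (p b : ℝ) (hp : 1 ≤ p) (hb : 0 ≤ b) :
    ∫⁻ t in Set.Ioc (0:ℝ) b, ENNReal.ofReal (t ^ (p - 1)) =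
      ENNReal.ofReal (b ^ p / p) := by
  have h : ∫ t in (0:ℝ)..b, t ^ (p - 1) = b ^ p / p := by
    rw [integral_rpow (by left; linarith)]
    rw [sub_add_cancel, Real.zero_rpow (by linarith), sub_zero]
  have hi : IntervalIntegrable (fun t : ℝ => t ^ (p - 1)) volume 0 b :=
    intervalIntegral.intervalIntegrable_rpow' (by linarith)
  rw [intervalIntegral.integral_of_le hb] at h
  rw [← h, ofReal_integral_eq_lintegral_ofReal hi.1]
  filter_upwards [ae_restrict_mem measurableSet_Ioc] with t ht
  have : (0:ℝ) < t := ht.1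
  simp only [Pi.zero_apply]
  positivity

theorem moment_aux {Ω : Type*} [MeasurableSpace Ω] (P : Measure Ω)
    [IsProbabilityMeasure P] (X : Ω → ℝ) (hX : Measurable X)
    (h0 : ∀ ω, 0 ≤ X ω) (A : ℝ) (hA : 2 ≤ A)
    (ht : ∀ x : ℝ, 0 < x → (P {ω | x < X ω}).toReal ≤ 2 * A * Real.exp (-x))
    (p : ℝ) (hp : 1 ≤ p) :
    ∫ ω, X ω ^ p ∂P ≤ (p ^ p + Real.log A ^ p) * 4 ^ p := by
  have hL : 0 ≤ Real.log A := Real.log_nonneg (by linarith)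
  set L := Real.log A with hLdef
  have hAL : A = Real.exp L := (Real.exp_log (by linarith)).symm
  have hG : 0 < Real.Gamma p := Real.Gamma_pos_of_pos (by linarith)
  have key : ∫⁻ ω, ENNReal.ofReal (X ω ^ p) ∂P ≤
      ENNReal.ofReal ((p ^ p + L ^ p) * 4 ^ p) := by
    rw [lintegral_rpow_eq_lintegral_meas_lt_mul P (Filter.Eventually.of_forall h0)
      hX.aemeasurable (by linarith : 0 < p)]
    have hb : ∫⁻ t in Set.Ioi (0:ℝ), P {a | t < X a} * ENNReal.ofReal (t ^ (p - 1)) ≤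
        ENNReal.ofReal ((2 * L) ^ p / p) + 2 * ENNReal.ofReal (2 ^ p * Real.Gamma p) := by
      rw [← lint_gamma p hp, ← lint_pow p (2 * L) hp (by linarith)]
      have hun : Set.Ioi (0:ℝ) = Set.Ioc 0 (2 * L) ∪ Set.Ioi (2 * L) :=
        (Set.Ioc_union_Ioi_eq_Ioi (by linarith)).symm
      conv_lhs => rw [hun]
      refine (lintegral_union_le _ _ _).trans (add_le_add ?_ ?_)
      · refine lintegral_mono fun t => ?_
        exact mul_le_of_le_one_left (by simp) prob_le_one
      · rw [← lintegral_const_mul' _ _ (by simp)]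
        refine le_trans ?_ (lintegral_mono_set
          (Set.Ioi_subset_Ioi (by linarith : 0 ≤ 2 * L)))
        refine setLIntegral_mono' measurableSet_Ioi fun t htt => ?_
        have h2 : 2 * L < t := htt
        have h3 : 0 < t := by linarith
        have h4 : P {a | t < X a} ≤ ENNReal.ofReal (2 * Real.exp (-((1/2) * t))) := by
          rw [← ENNReal.ofReal_toReal (measure_ne_top P {a | t < X a})]
          refine ENNReal.ofReal_le_ofReal ((ht t h3).trans ?_)
          rw [hAL, mul_assoc, ← Real.exp_add]
          have : Real.exp (L + -t) ≤ Real.exp (-((1/2) * t)) :=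
            Real.exp_le_exp.2 (by linarith)
          linarith
        refine (mul_le_mul_left h4 _).trans ?_
        rw [← ENNReal.ofReal_mul (by positivity),
          show (2:ENNReal) = ENNReal.ofReal 2 by simp, ← ENNReal.ofReal_mul (by positivity)]
        exact ENNReal.ofReal_le_ofReal (le_of_eq (by ring))
    refine (mul_le_mul_right hb _).trans ?_
    rw [show (2:ENNReal) = ENNReal.ofReal 2 by simp, ← ENNReal.ofReal_mul (by positivity),
      ← ENNReal.ofReal_add (by positivity) (by positivity), ← ENNReal.ofReal_mul (by positivity)]
    apply ENNReal.ofReal_le_ofReal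
    have hg := gamma_le p hp
    rw [Real.Gamma_add_one (by linarith)] at hg
    have e1 : (2:ℝ) ≤ 2 ^ p := by
      simpa using Real.rpow_le_rpow_of_exponent_le (by norm_num : (1:ℝ) ≤ 2) hp
    have e2 : (4:ℝ) ^ p = 2 ^ p * 2 ^ p := by
      rw [← Real.mul_rpow (by norm_num) (by norm_num)]; norm_num
    have e3 : (2 * L) ^ p = 2 ^ p * L ^ p := Real.mul_rpow (by norm_num) hL
    have e4 : p * ((2 * L) ^ p / p + 2 * (2 ^ p * Real.Gamma p)) =
        2 ^ p * L ^ p + 2 * 2 ^ p * (p * Real.Gamma p) := by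
      rw [e3]; field_simp
    rw [e4, e2]
    have hLp : 0 ≤ L ^ p := by positivity
    have hpp : 0 ≤ p ^ p := by positivity
    have s1 : 2 ^ p * L ^ p ≤ 2 ^ p * 2 ^ p * L ^ p := by
      apply mul_le_mul_of_nonneg_right _ hLp
      nlinarith
    have s2 : 2 * 2 ^ p * (p * Real.Gamma p) ≤ 2 ^ p * 2 ^ p * p ^ p := by
      apply mul_le_mul _ hg (by positivity) (by positivity)
      nlinarith
    linarith
  rw [integral_eq_lintegral_of_nonneg_ae
    (Filter.Eventually.of_forall fun ω => Real.rpow_nonneg (h0 ω) p)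
    (hX.pow_const p).aestronglyMeasurable]
  exact ENNReal.toReal_le_of_le_ofReal (by positivity) key

/-- Lemma 2.3: a sub-Gaussian tail bound implies moment bounds. -/
theorem tail_to_moment {Ω : Type*} [MeasurableSpace Ω] (P : Measure Ω)
    [IsProbabilityMeasure P] (Z : Ω → ℝ) (hZmeas : Measurable Z)
    (hZnonneg : ∀ ω, 0 ≤ Z ω) (A Θ : ℝ) (hA : 2 ≤ A) (hΘ : 0 < Θ)
    (htail : ∀ ϑ : ℝ, 0 < ϑ →
      (P {ω | Z ω > ϑ}).toReal ≤
        2 * A * Real.exp (-ϑ ^ 2 / (2 * Real.exp 1 * Θ ^ 2))) :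
    ∀ p : ℝ, 1 ≤ p →
      ∫ ω, Z ω ^ (2 * p) ∂P ≤
        (p ^ p + Real.log A ^ p) * (8 * Real.exp 1 * Θ ^ 2) ^ p := by
  intro p hp
  have hK : 0 < 2 * Real.exp 1 * Θ ^ 2 := by positivity
  have hK8 : 8 * Real.exp 1 * Θ ^ 2 = 4 * (2 * Real.exp 1 * Θ ^ 2) := by ring
  rw [hK8]
  generalize 2 * Real.exp 1 * Θ ^ 2 = K at *
  have hm := moment_aux P (fun ω => Z ω ^ 2 / K) ((hZmeas.pow_const 2).div_const K)
    (fun ω => by positivity) A hA (by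
      intro x hx
      have h := htail (Real.sqrt (K * x)) (by positivity)
      rw [Real.sq_sqrt (by positivity)] at h
      have e : -(K * x) / K = -x := by field_simp
      rw [e] at h
      convert h using 4
      ext ω
      simp only [Set.mem_setOf_eq, gt_iff_lt]
      rw [lt_div_iff₀ hK, Real.sqrt_lt (by positivity) (hZnonneg ω), mul_comm]) p hp
  have e : ∀ ω, Z ω ^ (2 * p) = K ^ p * (Z ω ^ 2 / K) ^ p := by
    intro ω
    rw [← Real.mul_rpow hK.le (by positivity), mul_div_cancel₀ _ hK.ne',
      Real.rpow_mul (hZnonneg ω), Real.rpow_two]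
  simp_rw [e]
  rw [integral_const_mul, Real.mul_rpow (by norm_num) hK.le]
  have := mul_le_mul_of_nonneg_left hm (by positivity : 0 ≤ K ^ p)
  linarith
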